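/- Let K be a field of characteristic p > 2, and m, n positive integers. Let R = K[A,B,C,D,T]/I with I generated by the 2×2 minors of the matrix with rows (A²+T^m, B, D), (C, A², B^n - D). Then the singular locus of Spec R is V(J) where J = (a, b, c(c + t^m), d). -/

import Mathlib

open MvPolynomial

/-- A Noetherian local ring is regular if its maximal ideal is generated by
dim-many elements. -/
def IsRegularLocal (S : Type) [CommRing S] [IsLocalRing S] : Prop :=
  IsNoetherianRing S ∧ ∃ s : Finset S, Ideal.span (s : Set S) = IsLocalRing.maximalIdeal S ∧
    (s.card : WithBot (WithTop ℕ)) = ringKrullDim S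

/-!
Let `Q` be the preimage of `P` in `S = K[A, B, C, D, T]`. Once an entry of the matrix is inverted,
the two minors through its column generate `I`. If `P` misses `V(J)`, some entry outside `Q` comes
with a `2 × 2` Jacobian of these two minors outside `Q`; their classes in the cotangent space of
`S_Q` are then independent, so `S_Q / I` is regular.

Conversely, `edim (S_Q / I)` is `edim S_Q` minus the dimension of the image of `I` in `𝔪 / 𝔪²`,
while `dim (S_Q / I) ≤ dim S_Q - ht I`. If `P` contains `J`, then modulo `Q²` the ideal `I` is
generated by a single element of `Q`, whereas `ht I ≥ 2`: one minor is prime and does not divide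
another.
-/

open IsLocalRing

theorem isRegularLocal_iff_isRegularLocalRing (S : Type) [CommRing S] [IsLocalRing S] :
    IsRegularLocal S ↔ IsRegularLocalRing S := by
  refine ⟨fun ⟨_, s, hs, hcard⟩ ↦ ?_, fun h ↦ ?_⟩
  · refine .of_spanFinrank_maximalIdeal_le S (hcard ▸ Nat.cast_le.2 ?_)
    simpa [← hs] using Submodule.spanFinrank_span_le_ncard_of_finite (R := S) s.finite_toSet
  · obtain ⟨s, hcard, hs⟩ :=
      (IsNoetherian.noetherian (maximalIdeal S)).exists_span_finset_card_eq_spanFinrank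
    exact ⟨inferInstance, s, hs, hcard ▸ h.spanFinrank_maximalIdeal⟩

section Height

variable {S R : Type*} [CommRing S] [CommRing R]

theorem height_add_height_ker_le_height_comap {φ : S →+* R} (hφ : Function.Surjective φ)
    (P : Ideal R) [P.IsPrime] : P.height + (RingHom.ker φ).height ≤ (P.comap φ).height := by
  have chain (k : ℕ) : ∀ P : Ideal R, P.IsPrime → k ≤ P.height →
      k + (RingHom.ker φ).height ≤ (P.comap φ).height := by
    induction k with
    | zero => intro P _ _; simpa using Ideal.height_mono (Ideal.ker_le_comap φ)
    | succ k ih =>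
      intro P _ hk
      obtain ⟨q, _, hqP, hkq⟩ : ∃ q : Ideal R, q.IsPrime ∧ q < P ∧ k ≤ q.height := by
        by_contra! h
        exact absurd (hk.trans (Ideal.height_le_iff.2 h)) (by exact_mod_cast k.lt_succ_self.not_ge)
      have hlt : q.comap φ < P.comap φ :=
        (Ideal.comap_mono hqP.le).lt_of_ne ((Ideal.comap_injective_of_surjective φ hφ).ne hqP.ne)
      calc ((k + 1 : ℕ) : ℕ∞) + (RingHom.ker φ).height
          = k + (RingHom.ker φ).height + 1 := by push_cast; ring
        _ ≤ (q.comap φ).height + 1 := by gcongr; exact ih q ‹_› hkq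
        _ ≤ (P.comap φ).height := Ideal.height_add_one_le_of_lt_of_isPrime hlt
  cases hP : P.height with
  | top =>
    rw [top_add, ← ENat.forall_natCast_le_iff_le]
    exact fun k _ ↦ le_self_add.trans (chain k P ‹_› (by simp [hP]))
  | coe k => exact chain k P ‹_› hP.ge

theorem ringKrullDim_quotient_add_height_le [IsLocalRing S] {I : Ideal S} (hI : I ≠ ⊤) :
    ringKrullDim (S ⧸ I) + I.height ≤ ringKrullDim S := by
  have := Ideal.Quotient.nontrivial_iff.2 hI
  have : IsLocalRing (S ⧸ I) := .of_surjective' _ Ideal.Quotient.mk_surjective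
  have : IsLocalHom (Ideal.Quotient.mk I) := .of_surjective _ Ideal.Quotient.mk_surjective
  have h := height_add_height_ker_le_height_comap (Ideal.Quotient.mk_surjective (I := I))
    (maximalIdeal (S ⧸ I))
  rw [Ideal.mk_ker, maximalIdeal_comap] at h
  rw [← maximalIdeal_height_eq_ringKrullDim, ← maximalIdeal_height_eq_ringKrullDim]
  exact_mod_cast h

theorem two_le_height_of_prime_mem_of_not_dvd [IsDomain S] {I : Ideal S} {g x : S} (hg : Prime g)
    (hgI : g ∈ I) (hxI : x ∈ I) (hx : ¬ g ∣ x) : 2 ≤ I.height := by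
  have : (Ideal.span {g}).IsPrime := (Ideal.span_singleton_prime hg.ne_zero).2 hg
  have hg1 : 1 ≤ (Ideal.span {g}).height :=
    Ideal.one_le_height_span_singleton_of_mem_nonZeroDivisors
      (mem_nonZeroDivisors_of_ne_zero hg.ne_zero)
  rw [Ideal.height_eq_inf_minimalPrimes]
  refine le_iInf₂ fun q hq ↦ ?_
  have := hq.isPrime
  have hlt : Ideal.span {g} < q := by
    refine lt_of_le_of_ne ((Ideal.span_singleton_le_iff_mem q).2 (hq.le hgI)) ?_
    rintro rfl
    exact hx (Ideal.mem_span_singleton.1 (hq.le hxI))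
  calc (2 : ℕ∞) = 1 + 1 := by norm_num
    _ ≤ (Ideal.span {g}).height + 1 := by gcongr
    _ ≤ q.height := Ideal.height_add_one_le_of_lt_of_isPrime hlt

end Height

section ConormalImage

variable {S : Type*} [CommRing S] [IsLocalRing S]

/-- The image of an ideal `I` of a local ring `(S, 𝔪)` in the cotangent space `𝔪 / 𝔪²`; its
dimension is the drop in embedding dimension from `S` to `S ⧸ I`. -/
noncomputable def conormalImage (I : Ideal S) : Submodule (ResidueField S) (CotangentSpace S) :=
  Submodule.span (ResidueField S) ((maximalIdeal S).toCotangent '' {x | (x : S) ∈ I})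

theorem restrictScalars_conormalImage (I : Ideal S) :
    (conormalImage I).restrictScalars S =
      (Submodule.comap (maximalIdeal S).subtype I).map (maximalIdeal S).toCotangent := by
  rw [conormalImage, Submodule.restrictScalars_span _ _ Ideal.Quotient.mk_surjective,
    Submodule.span_image]
  congr 1
  exact Submodule.span_eq (Submodule.comap (maximalIdeal S).subtype I)

theorem exists_addEquiv_cotangentSpace_quotient {I : Ideal S} [IsLocalRing (S ⧸ I)]
    (hI : I ≤ maximalIdeal S) :
    ∃ e : (CotangentSpace S ⧸ conormalImage I) ≃+ CotangentSpace (S ⧸ I),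
      ∀ (r : S) (v : CotangentSpace S ⧸ conormalImage I),
        e (residue S r • v) = residue (S ⧸ I) (Ideal.Quotient.mk I r) • e v := by
  have : IsLocalHom (Ideal.Quotient.mk I) := .of_surjective _ Ideal.Quotient.mk_surjective
  have hcomap : (maximalIdeal (S ⧸ I)).comap (algebraMap S (S ⧸ I)) =
      RingHom.ker (algebraMap S (S ⧸ I)) ⊔ maximalIdeal S := by
    rw [Ideal.Quotient.algebraMap_eq, Ideal.mk_ker, sup_eq_right.2 hI, maximalIdeal_comap]
  have hle : maximalIdeal S ≤ (maximalIdeal (S ⧸ I)).comap (Algebra.ofId S (S ⧸ I)) :=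
    le_of_le_of_eq le_sup_right hcomap.symm
  have hker : (conormalImage I).restrictScalars S =
      (Ideal.mapCotangent _ _ (Algebra.ofId S (S ⧸ I)) hle).ker := by
    rw [Ideal.mapCotangent_ker_of_surjective Ideal.Quotient.mk_surjective hcomap,
      restrictScalars_conormalImage, Ideal.Quotient.algebraMap_eq, Ideal.mk_ker, inf_eq_left.2 hI]
  let e := (Submodule.Quotient.restrictScalarsEquiv S (conormalImage I)).symm ≪≫ₗ
    Submodule.quotEquivOfEq _ _ hker ≪≫ₗ LinearMap.quotKerEquivOfSurjective _
      (Ideal.mapCotangent_surjective_of_comap_eq Ideal.Quotient.mk_surjective hcomap)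
  exact ⟨e.toAddEquiv, fun r v ↦ e.map_smul r v⟩

theorem finrank_cotangentSpace_quotient_add_finrank_conormalImage [IsNoetherianRing S]
    {I : Ideal S} [IsLocalRing (S ⧸ I)] (hI : I ≤ maximalIdeal S) :
    Module.finrank (ResidueField (S ⧸ I)) (CotangentSpace (S ⧸ I)) +
      Module.finrank (ResidueField S) (conormalImage I) =
    Module.finrank (ResidueField S) (CotangentSpace S) := by
  have : IsLocalHom (Ideal.Quotient.mk I) := .of_surjective _ Ideal.Quotient.mk_surjective
  obtain ⟨e, he⟩ := exists_addEquiv_cotangentSpace_quotient hI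
  have hbij : Function.Bijective (ResidueField.map (Ideal.Quotient.mk I)) :=
    ⟨RingHom.injective _, Ideal.Quotient.lift_surjective_of_surjective _ _
      (residue_surjective.comp Ideal.Quotient.mk_surjective)⟩
  have hrank := rank_eq_of_equiv_equiv _ e hbij fun r v ↦ by
    obtain ⟨r, rfl⟩ := residue_surjective r
    exact he r v
  rw [← Submodule.finrank_quotient_add_finrank (conormalImage I)]
  simp only [Module.finrank, hrank]

theorem finrank_conormalImage_le_card {ι : Type*} [Fintype ι] {I : Ideal S} {g : ι → S}
    (hg : ∀ j, g j ∈ maximalIdeal S) (hI : I ≤ Ideal.span (Set.range g) ⊔ maximalIdeal S ^ 2) :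
    Module.finrank (ResidueField S) (conormalImage I) ≤ Fintype.card ι := by
  set v : ι → CotangentSpace S := fun j ↦ (maximalIdeal S).toCotangent ⟨g j, hg j⟩
  have hle : conormalImage I ≤ Submodule.span (ResidueField S) (Set.range v) := by
    refine Submodule.span_le.2 ?_
    rintro _ ⟨x, hx, rfl⟩
    obtain ⟨_, hy, z, hz, hyz⟩ := Submodule.mem_sup.1 (hI hx)
    obtain ⟨a, rfl⟩ := Ideal.mem_span_range_iff_exists_fun.1 hy
    have hsum : (maximalIdeal S).toCotangent x = ∑ j, a j • v j := by
      simp only [v, ← map_smul, ← map_sum]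
      refine (Ideal.toCotangent_eq _).2 ?_
      simpa [← hyz] using hz
    rw [SetLike.mem_coe, hsum]
    exact Submodule.sum_mem _ fun j _ ↦
      Submodule.smul_of_tower_mem _ _ (Submodule.subset_span ⟨j, rfl⟩)
  have := FiniteDimensional.span_of_finite (ResidueField S) (Set.finite_range v)
  exact (Submodule.finrank_mono hle).trans (finrank_range_le_card v)

theorem not_isRegularLocalRing_quotient_of_card_lt_height [IsNoetherianRing S] {ι : Type*}
    [Fintype ι] {I : Ideal S} (hIm : I ≤ maximalIdeal S) {g : ι → S}
    (hg : ∀ j, g j ∈ maximalIdeal S) (hI : I ≤ Ideal.span (Set.range g) ⊔ maximalIdeal S ^ 2)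
    (hlt : Fintype.card ι < I.height) : ¬ IsRegularLocalRing (S ⧸ I) := by
  intro h
  have hle := finrank_conormalImage_le_card hg hI
  have hedim := finrank_cotangentSpace_quotient_add_finrank_conormalImage hIm
  have hI' : I ≠ ⊤ := (hIm.trans_lt (maximalIdeal.isMaximal S).lt_top).ne
  set e := Module.finrank (ResidueField (S ⧸ I)) (CotangentSpace (S ⧸ I))
  have hdim : (e : WithBot ℕ∞) + I.height ≤ e + Fintype.card ι := calc
    (e : WithBot ℕ∞) + I.height = ringKrullDim (S ⧸ I) + I.height := by
      rw [(IsRegularLocalRing.iff_finrank_cotangentSpace _).1 h]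
    _ ≤ ringKrullDim S := ringKrullDim_quotient_add_height_le hI'
    _ ≤ Module.finrank (ResidueField S) (CotangentSpace S) := by
      rw [← spanFinrank_maximalIdeal_eq_finrank_cotangentSpace]
      exact ringKrullDim_le_spanFinrank_maximalIdeal S
    _ ≤ e + Fintype.card ι := by exact_mod_cast hedim.ge.trans (by gcongr)
  exact hlt.not_ge ((ENat.add_le_add_iff_left (ENat.natCast_ne_top e)).1 (by exact_mod_cast hdim))

end ConormalImage

theorem isRegularLocalRing_quotient_of_linearIndependent {S : Type*} [CommRing S]
    [IsRegularLocalRing S] {ι : Type*} [Finite ι] {f : ι → S} (hf : ∀ j, f j ∈ maximalIdeal S)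
    (hli : LinearIndependent (ResidueField S)
      fun j ↦ (maximalIdeal S).toCotangent ⟨f j, hf j⟩) :
    IsRegularLocalRing (S ⧸ Ideal.span (Set.range f)) := by
  have := Fintype.ofFinite ι
  set I := Ideal.span (Set.range f)
  have hI : I ≤ maximalIdeal S := Ideal.span_le.2 (Set.range_subset_iff.2 hf)
  have := Ideal.Quotient.nontrivial_iff.2 (hI.trans_lt (maximalIdeal.isMaximal S).lt_top).ne
  have : IsLocalRing (S ⧸ I) := .of_surjective' _ Ideal.Quotient.mk_surjective
  have hcard : Fintype.card ι ≤ Module.finrank (ResidueField S) (conormalImage I) := by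
    rw [← finrank_span_eq_card hli]
    refine Submodule.finrank_mono (Submodule.span_mono ?_)
    rintro _ ⟨j, rfl⟩
    exact ⟨_, Ideal.subset_span ⟨j, rfl⟩, rfl⟩
  have hspan : I.spanFinrank ≤ Fintype.card ι := by
    rw [← Nat.card_eq_fintype_card]
    exact (Submodule.spanFinrank_span_le_ncard_of_finite (Set.finite_range f)).trans
      (Finite.card_range_le f)
  have hdim : Module.finrank (ResidueField S) (CotangentSpace S) ≤
      ringKrullDim (S ⧸ I) + Fintype.card ι := by
    rw [(IsRegularLocalRing.iff_finrank_cotangentSpace S).1 ‹_›]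
    refine (ringKrullDim_le_ringKrullDim_quotient_add_spanFinrank I ?_).trans (by gcongr)
    rwa [ringJacobson_eq_maximalIdeal]
  rw [← finrank_cotangentSpace_quotient_add_finrank_conormalImage hI] at hdim
  refine .of_spanFinrank_maximalIdeal_le _ ?_
  rw [spanFinrank_maximalIdeal_eq_finrank_cotangentSpace,
    ← ENat.WithBot.add_le_add_natCast_right_iff (c := Fintype.card ι)]
  exact le_trans (by exact_mod_cast Nat.add_le_add_left hcard _) hdim

section Localization

variable {S : Type*} [CommRing S]

theorem le_comap_quotientMk {I : Ideal S} (P : Ideal (S ⧸ I)) : I ≤ P.comap (Ideal.Quotient.mk I) :=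
  I.mk_ker.ge.trans (Ideal.ker_le_comap _)

theorem ker_localRingHom_quotientMk (I : Ideal S) (P : Ideal (S ⧸ I)) [P.IsPrime] :
    RingHom.ker (Localization.localRingHom (P.comap (Ideal.Quotient.mk I)) P
      (Ideal.Quotient.mk I) rfl) =
      I.map (algebraMap S (Localization.AtPrime (P.comap (Ideal.Quotient.mk I)))) := by
  have h := IsLocalization.ker_map (M := (P.comap (Ideal.Quotient.mk I)).primeCompl)
    (S := Localization.AtPrime (P.comap (Ideal.Quotient.mk I))) (Localization.AtPrime P) _
    (Ideal.map_primeCompl_comap_of_surjective _ Ideal.Quotient.mk_surjective P)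
  rwa [Ideal.mk_ker] at h

theorem isRegularLocalRing_localization_quotient_iff (I : Ideal S) (P : Ideal (S ⧸ I))
    [P.IsPrime] :
    IsRegularLocalRing (Localization.AtPrime P) ↔
      IsRegularLocalRing (Localization.AtPrime (P.comap (Ideal.Quotient.mk I)) ⧸
        I.map (algebraMap S (Localization.AtPrime (P.comap (Ideal.Quotient.mk I))))) := by
  let e := (Ideal.quotEquivOfEq (ker_localRingHom_quotientMk I P).symm).trans
    (RingHom.quotientKerEquivOfSurjective
      (RingHom.surjective_localRingHom_of_surjective _ Ideal.Quotient.mk_surjective P))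
  exact ⟨fun _ ↦ .of_ringEquiv e.symm, fun _ ↦ .of_ringEquiv e⟩

theorem height_le_height_map_of_isLocalization (I : Ideal S) (M : Submonoid S) (L : Type*)
    [CommRing L] [Algebra S L] [IsLocalization M L] :
    I.height ≤ (I.map (algebraMap S L)).height := by
  rw [← IsLocalization.height_under M (I.map (algebraMap S L))]
  exact Ideal.height_mono Ideal.le_comap_map

theorem not_isRegularLocalRing_localization_of_card_lt_height [IsNoetherianRing S] {ι : Type*}
    [Fintype ι] {I : Ideal S} (P : Ideal (S ⧸ I)) [P.IsPrime] {g : ι → S}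
    (hg : ∀ j, g j ∈ P.comap (Ideal.Quotient.mk I))
    (hI : I ≤ Ideal.span (Set.range g) ⊔ P.comap (Ideal.Quotient.mk I) ^ 2)
    (hlt : Fintype.card ι < I.height) : ¬ IsRegularLocalRing (Localization.AtPrime P) := by
  set Q := P.comap (Ideal.Quotient.mk I)
  set φ := algebraMap S (Localization.AtPrime Q)
  have hφ : Q.map φ = maximalIdeal (Localization.AtPrime Q) :=
    Localization.AtPrime.map_eq_maximalIdeal
  rw [isRegularLocalRing_localization_quotient_iff]
  refine not_isRegularLocalRing_quotient_of_card_lt_height (g := φ ∘ g)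
    (hφ ▸ Ideal.map_mono (le_comap_quotientMk P)) (fun j ↦ hφ ▸ Ideal.mem_map_of_mem φ (hg j)) ?_
    (hlt.trans_le (height_le_height_map_of_isLocalization I Q.primeCompl _))
  rw [Set.range_comp, ← Ideal.map_span, ← hφ, ← Ideal.map_pow, ← Ideal.map_sup]
  exact Ideal.map_mono hI

end Localization

section Jacobian

variable {K S : Type*} [CommRing K] [CommRing S] [Algebra K S]

/-- The Jacobian matrix of a family of elements with respect to a family of derivations. -/
def derivationJacobian {ι κ : Type*} (D : ι → Derivation K S S) (f : κ → S) : Matrix ι κ S :=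
  Matrix.of fun i j ↦ D i (f j)

theorem derivation_apply_mem_of_mem_sq (D : Derivation K S S) {Q : Ideal S} {x : S}
    (hx : x ∈ Q ^ 2) : D x ∈ Q := by
  rw [pow_two] at hx
  refine Submodule.mul_induction_on hx (fun a ha b hb ↦ ?_) fun a b ha hb ↦ ?_
  · rw [D.leibniz]
    exact Q.add_mem (Q.mul_mem_right _ ha) (Q.mul_mem_right _ hb)
  · rw [map_add]
    exact Q.add_mem ha hb

variable {ι : Type*} [Fintype ι] [DecidableEq ι] {Q : Ideal S} [Q.IsPrime] {f : ι → S}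
  {D : ι → Derivation K S S}

theorem mem_of_sum_mul_mem_sq_of_det_notMem (hf : ∀ j, f j ∈ Q)
    (hdet : (derivationJacobian D f).det ∉ Q) {a : ι → S}
    (ha : ∑ j, a j * f j ∈ Q ^ 2) (j : ι) : a j ∈ Q := by
  set π := Ideal.Quotient.mk Q
  set M := derivationJacobian D f
  have hM : (π.mapMatrix M).mulVec (π ∘ a) = 0 := by
    ext i
    have hi : π (D i (∑ j, a j * f j)) = 0 :=
      Ideal.Quotient.eq_zero_iff_mem.2 (derivation_apply_mem_of_mem_sq (D i) ha)
    have hπf (j : ι) : π (f j) = 0 := Ideal.Quotient.eq_zero_iff_mem.2 (hf j)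
    simpa [M, derivationJacobian, Matrix.mulVec, dotProduct, hπf, mul_comm] using hi
  have hdet' : (π.mapMatrix M).det ≠ 0 := by
    rw [← RingHom.map_det]
    exact mt Ideal.Quotient.eq_zero_iff_mem.1 hdet
  exact Ideal.Quotient.eq_zero_iff_mem.1
    (congrFun (Matrix.eq_zero_of_mulVec_eq_zero hdet' hM) j)

theorem linearIndependent_toCotangent_of_det_notMem (hf : ∀ j, f j ∈ Q)
    (hf' : ∀ j, algebraMap S (Localization.AtPrime Q) (f j) ∈
      maximalIdeal (Localization.AtPrime Q))
    (hdet : (derivationJacobian D f).det ∉ Q) :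
    LinearIndependent (ResidueField (Localization.AtPrime Q)) fun j ↦
      (maximalIdeal (Localization.AtPrime Q)).toCotangent ⟨_, hf' j⟩ := by
  set L := Localization.AtPrime Q
  set φ := algebraMap S L
  rw [Fintype.linearIndependent_iff]
  intro g hg
  choose y hy using fun j ↦ residue_surjective (g j)
  obtain ⟨s, a, hs⟩ : ∃ (s : Q.primeCompl) (a : ι → S), ∀ j, φ (a j) = φ s * y j := by
    obtain ⟨s, hs⟩ := IsLocalization.exist_integer_multiples_of_finite Q.primeCompl y
    choose a ha using hs
    exact ⟨s, a, fun j ↦ by rw [ha, Algebra.smul_def]⟩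
  have hmax : Q.map φ = maximalIdeal L := Localization.AtPrime.map_eq_maximalIdeal
  have hsum : φ (∑ j, a j * f j) ∈ (Q ^ 2).map φ := by
    have hzero : (maximalIdeal L).toCotangent (∑ j, φ (a j) • ⟨φ (f j), hf' j⟩) = 0 := by
      rw [← smul_zero (φ s), ← hg, Finset.smul_sum, map_sum]
      refine Finset.sum_congr rfl fun j _ ↦ ?_
      rw [hs, map_smul, mul_smul, ← hy]
      rfl
    simpa [hmax, Ideal.map_pow] using ((maximalIdeal L).toCotangent_eq_zero _).1 hzero
  obtain ⟨u, hu, hua⟩ :=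
    (IsLocalization.algebraMap_mem_map_algebraMap_iff Q.primeCompl L _ _).1 hsum
  rw [Finset.mul_sum] at hua
  simp only [← mul_assoc] at hua
  intro j
  have haj : a j ∈ Q := (Ideal.IsPrime.mem_or_mem ‹_›
    (mem_of_sum_mul_mem_sq_of_det_notMem hf hdet hua j)).resolve_left hu
  have hsy : φ s * y j ∈ maximalIdeal L := hs j ▸ hmax ▸ Ideal.mem_map_of_mem φ haj
  rw [← hy, residue_eq_zero_iff]
  exact (Ideal.unit_mul_mem_iff_mem _ (IsLocalization.map_units L s)).1 hsy

theorem isRegularLocalRing_localization_of_det_notMem [IsRegularRing S] {I : Ideal S}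
    (P : Ideal (S ⧸ I)) [P.IsPrime] (hf : ∀ j, f j ∈ I) {s : S}
    (hs : s ∉ P.comap (Ideal.Quotient.mk I)) (hsI : ∀ x ∈ I, s * x ∈ Ideal.span (Set.range f))
    (hdet : (derivationJacobian D f).det ∉ P.comap (Ideal.Quotient.mk I)) :
    IsRegularLocalRing (Localization.AtPrime P) := by
  set Q := P.comap (Ideal.Quotient.mk I)
  set φ := algebraMap S (Localization.AtPrime Q)
  have hfQ (j : ι) : f j ∈ Q := le_comap_quotientMk P (hf j)
  have hfm (j : ι) : φ (f j) ∈ maximalIdeal (Localization.AtPrime Q) :=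
    Localization.AtPrime.map_eq_maximalIdeal (I := Q) ▸ Ideal.mem_map_of_mem φ (hfQ j)
  have hmap : I.map φ = Ideal.span (Set.range fun j ↦ φ (f j)) := by
    rw [Set.range_comp', ← Ideal.map_span]
    refine le_antisymm (Ideal.map_le_iff_le_comap.2 fun x hx ↦ ?_)
      (Ideal.map_mono (Ideal.span_le.2 (Set.range_subset_iff.2 hf)))
    exact (IsLocalization.algebraMap_mem_map_algebraMap_iff Q.primeCompl _ _ _).2
      ⟨s, hs, hsI x hx⟩
  rw [isRegularLocalRing_localization_quotient_iff, hmap]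
  exact isRegularLocalRing_quotient_of_linearIndependent hfm
    (linearIndependent_toCotangent_of_det_notMem hfQ hfm hdet)

end Jacobian

section Minors

variable {S ι : Type*} [CommRing S]

/-- The maximal minor of a two-rowed matrix on the columns `j` and `k`, in this order. -/
def colMinor (M : Matrix (Fin 2) ι S) (j k : ι) : S :=
  (M.submatrix id ![j, k]).det

/-- The ideal generated by the maximal minors of a two-rowed matrix. -/
def minorsIdeal (M : Matrix (Fin 2) ι S) : Ideal S :=
  Ideal.span (Set.range fun p : ι × ι ↦ colMinor M p.1 p.2)

theorem colMinor_eq (M : Matrix (Fin 2) ι S) (j k : ι) :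
    colMinor M j k = M 0 j * M 1 k - M 0 k * M 1 j := by
  simp [colMinor, Matrix.det_fin_two]

theorem colMinor_mem_minorsIdeal (M : Matrix (Fin 2) ι S) (j k : ι) :
    colMinor M j k ∈ minorsIdeal M :=
  Ideal.subset_span ⟨(j, k), rfl⟩

theorem colMinor_mem_comap_mk (M : Matrix (Fin 2) ι S) (P : Ideal (S ⧸ minorsIdeal M)) (j k : ι) :
    colMinor M j k ∈ P.comap (Ideal.Quotient.mk (minorsIdeal M)) :=
  le_comap_quotientMk P (colMinor_mem_minorsIdeal M j k)

theorem colMinor_self (M : Matrix (Fin 2) ι S) (j : ι) : colMinor M j j = 0 := by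
  rw [colMinor_eq, mul_comm, sub_self]

theorem colMinor_swap (M : Matrix (Fin 2) ι S) (j k : ι) : colMinor M j k = -colMinor M k j := by
  simp only [colMinor_eq]
  ring

theorem minorsIdeal_fin_three (M : Matrix (Fin 2) (Fin 3) S) :
    minorsIdeal M = Ideal.span {colMinor M 0 1, colMinor M 0 2, colMinor M 1 2} := by
  refine le_antisymm (Ideal.span_le.2 ?_) (Ideal.span_le.2 ?_)
  · set J := Ideal.span {colMinor M 0 1, colMinor M 0 2, colMinor M 1 2}
    have h01 : colMinor M 0 1 ∈ J := Ideal.subset_span (by simp)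
    have h02 : colMinor M 0 2 ∈ J := Ideal.subset_span (by simp)
    have h12 : colMinor M 1 2 ∈ J := Ideal.subset_span (by simp)
    have hneg {j k : Fin 3} (h : colMinor M j k ∈ J) : colMinor M k j ∈ J :=
      colMinor_swap M k j ▸ J.neg_mem h
    have hself (j : Fin 3) : colMinor M j j ∈ J := colMinor_self M j ▸ J.zero_mem
    rintro _ ⟨⟨j, k⟩, rfl⟩
    fin_cases j <;> fin_cases k
    exacts [hself 0, h01, h02, hneg h01, hself 1, h12, hneg h02, hneg h12, hself 2]
  · rintro _ (rfl | rfl | rfl) <;> exact colMinor_mem_minorsIdeal M _ _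

theorem entry_mul_colMinor (M : Matrix (Fin 2) ι S) (i : Fin 2) (j k l : ι) :
    M i k * colMinor M j l = M i j * colMinor M k l - M i l * colMinor M k j := by
  simp only [colMinor_eq]
  match i with
  | 0 => ring
  | 1 => ring

theorem entry_mul_mem_span_colMinor {κ : Type*} (M : Matrix (Fin 2) ι S) (i : Fin 2) {k : ι}
    {c : κ → ι} (hc : ∀ l ≠ k, ∃ j, c j = l) {x : S} (hx : x ∈ minorsIdeal M) :
    M i k * x ∈ Ideal.span (Set.range fun j ↦ colMinor M k (c j)) := by
  set J := Ideal.span (Set.range fun j ↦ colMinor M k (c j))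
  have hk (l : ι) : colMinor M k l ∈ J := by
    obtain rfl | hl := eq_or_ne l k
    · exact colMinor_self M l ▸ J.zero_mem
    · obtain ⟨j, rfl⟩ := hc l hl
      exact Ideal.subset_span ⟨j, rfl⟩
  induction hx using Submodule.span_induction with
  | mem x h =>
    obtain ⟨⟨j, l⟩, rfl⟩ := h
    rw [entry_mul_colMinor]
    exact J.sub_mem (J.mul_mem_left _ (hk l)) (J.mul_mem_left _ (hk j))
  | zero => simp
  | add x y _ _ hx hy => rw [mul_add]; exact J.add_mem hx hy
  | smul a x _ hx => rw [smul_eq_mul, mul_left_comm]; exact J.mul_mem_left _ hx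

theorem isRegularLocalRing_localization_of_entry_notMem {K κ : Type*} [CommRing K] [Algebra K S]
    [IsRegularRing S] [Fintype κ] [DecidableEq κ] {M : Matrix (Fin 2) ι S}
    (P : Ideal (S ⧸ minorsIdeal M)) [P.IsPrime] (i : Fin 2) {k : ι} (c : κ → ι)
    (hc : ∀ l ≠ k, ∃ j, c j = l) (D : κ → Derivation K S S)
    (hM : M i k ∉ P.comap (Ideal.Quotient.mk (minorsIdeal M)))
    (hdet : (derivationJacobian D fun j ↦ colMinor M k (c j)).det ∉
      P.comap (Ideal.Quotient.mk (minorsIdeal M))) :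
    IsRegularLocalRing (Localization.AtPrime P) :=
  isRegularLocalRing_localization_of_det_notMem P (fun _ ↦ colMinor_mem_minorsIdeal M _ _) hM
    (fun _ ↦ entry_mul_mem_span_colMinor M i hc) hdet

end Minors

section SinghMatrix

variable (K : Type*) (m n : ℕ)

/-- The matrix with rows `(A² + Tᵐ, B, D)` and `(C, A², Bⁿ - D)` over `K[A, B, C, D, T]`, whose
maximal minors define the ring `R`. The variables `A, B, C, D, T` are `X 0, …, X 4`. -/
noncomputable def singhMatrix [CommRing K] : Matrix (Fin 2) (Fin 3) (MvPolynomial (Fin 5) K) :=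
  !![X 0 ^ 2 + X 4 ^ m, X 1, X 3; X 2, X 0 ^ 2, X 1 ^ n - X 3]

theorem colMinor_singhMatrix_zero_one [CommRing K] :
    colMinor (singhMatrix K m n) 0 1 = (X 0 ^ 2 + X 4 ^ m) * X 0 ^ 2 - X 1 * X 2 :=
  colMinor_eq _ 0 1

theorem colMinor_singhMatrix_zero_two [CommRing K] :
    colMinor (singhMatrix K m n) 0 2 = (X 0 ^ 2 + X 4 ^ m) * (X 1 ^ n - X 3) - X 3 * X 2 :=
  colMinor_eq _ 0 2

theorem colMinor_singhMatrix_one_two [CommRing K] :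
    colMinor (singhMatrix K m n) 1 2 = X 1 * (X 1 ^ n - X 3) - X 3 * X 0 ^ 2 :=
  colMinor_eq _ 1 2

theorem minorsIdeal_singhMatrix [CommRing K] :
    minorsIdeal (singhMatrix K m n) = Ideal.span
      { (X 0 ^ 2) * (X 0 ^ 2 + X 4 ^ m) - X 1 * X 2,
        (X 0 ^ 2 + X 4 ^ m) * (X 1 ^ n - X 3) - X 2 * X 3,
        X 1 * (X 1 ^ n - X 3) - (X 0 ^ 2) * X 3 } := by
  rw [minorsIdeal_fin_three, colMinor_singhMatrix_zero_one, colMinor_singhMatrix_zero_two,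
    colMinor_singhMatrix_one_two, mul_comm (X 0 ^ 2 + X 4 ^ m) (X 0 ^ 2), mul_comm (X 3) (X 2),
    mul_comm (X 3) (X 0 ^ 2)]

variable [Field K]

theorem prime_colMinor_zero_one_singhMatrix : Prime (colMinor (singhMatrix K m n) 0 1) := by
  set g : MvPolynomial (Fin 5) K := (X 0 ^ 2 + X 4 ^ m) * X 0 ^ 2
  have hX : Prime (X 1 : MvPolynomial (Fin 5) K) := X_prime
  have hg : g ∈ supported K {2}ᶜ := by
    have hmem (i : Fin 5) (hi : i ≠ 2) : X i ∈ supported K ({2}ᶜ : Set (Fin 5)) :=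
      X_mem_supported.2 hi
    exact mul_mem (add_mem (pow_mem (hmem 0 (by decide)) 2) (pow_mem (hmem 4 (by decide)) m))
      (pow_mem (hmem 0 (by decide)) 2)
  have hdvd : ¬ X 1 ∣ g := by
    intro h
    obtain h | h := hX.dvd_or_dvd h
    · simpa using map_dvd (MvPolynomial.eval (Pi.single 4 1 : Fin 5 → K)) h
    · simpa using X_dvd_X.1 (hX.dvd_of_dvd_pow h)
  have hirr : Irreducible (-X 1 * X 2 + g) :=
    irreducible_mul_X_add _ _ 2 (neg_ne_zero.2 hX.ne_zero) (by simp)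
      (fun h ↦ mem_supported.1 hg h rfl)
      ((hX.irreducible.isRelPrime_iff_not_dvd.2 hdvd).neg_left)
  rw [colMinor_singhMatrix_zero_one, sub_eq_neg_add, ← neg_mul]
  exact hirr.prime

theorem two_le_height_minorsIdeal_singhMatrix : 2 ≤ (minorsIdeal (singhMatrix K m n)).height := by
  refine two_le_height_of_prime_mem_of_not_dvd (prime_colMinor_zero_one_singhMatrix K m n)
    (colMinor_mem_minorsIdeal _ 0 1) (colMinor_mem_minorsIdeal _ 1 2) fun h ↦ ?_
  have heval := map_dvd (MvPolynomial.eval (Pi.single 1 1 : Fin 5 → K)) h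
  simp [colMinor_singhMatrix_zero_one, colMinor_singhMatrix_one_two] at heval

variable {K m n} (P : Ideal (MvPolynomial (Fin 5) K ⧸ minorsIdeal (singhMatrix K m n)))
  [P.IsPrime]

theorem isRegularLocalRing_of_X_one_notMem (hB : X 1 ∉ P.comap (Ideal.Quotient.mk _)) :
    IsRegularLocalRing (Localization.AtPrime P) := by
  set Q := P.comap (Ideal.Quotient.mk (minorsIdeal (singhMatrix K m n))) with hQ
  have hprime : Q.IsPrime := hQ ▸ inferInstance
  have hJ : derivationJacobian ![pderiv 2, pderiv 3]
      (fun j ↦ colMinor (singhMatrix K m n) 1 (![0, 2] j)) = !![X 1, 0; 0, -X 1 - X 0 ^ 2] := by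
    ext1 i j
    fin_cases i <;> fin_cases j <;>
      simp [derivationJacobian, colMinor_eq, singhMatrix, pderiv_X]
  refine isRegularLocalRing_localization_of_entry_notMem P 0 (k := 1) ![0, 2] (by decide)
    ![pderiv 2, pderiv 3] hB ?_
  rw [hJ, Matrix.det_fin_two_of, mul_zero, sub_zero]
  refine hprime.mul_notMem hB fun h ↦ hB (hprime.mem_of_pow_mem (n + 1) ?_)
  have hrel : X 1 ^ (n + 1) =
      colMinor (singhMatrix K m n) 1 2 - X 3 * (-X 1 - X 0 ^ 2) := by
    rw [colMinor_singhMatrix_one_two]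
    ring
  exact hrel ▸ Q.sub_mem (colMinor_mem_comap_mk _ P 1 2) (Q.mul_mem_left _ h)

theorem isRegularLocalRing_of_X_three_notMem (hn : 0 < n)
    (hB : X 1 ∈ P.comap (Ideal.Quotient.mk _)) (hD : X 3 ∉ P.comap (Ideal.Quotient.mk _)) :
    IsRegularLocalRing (Localization.AtPrime P) := by
  set Q := P.comap (Ideal.Quotient.mk (minorsIdeal (singhMatrix K m n))) with hQ
  have hprime : Q.IsPrime := hQ ▸ inferInstance
  set dBn : MvPolynomial (Fin 5) K := pderiv 1 (X 1 ^ n) with hdBn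
  have hJ : derivationJacobian ![pderiv 1, pderiv 2]
      (fun j ↦ colMinor (singhMatrix K m n) 2 (![0, 1] j)) =
        !![-((X 0 ^ 2 + X 4 ^ m) * dBn), X 3 - X 1 ^ n + -(X 1 * dBn); X 3, 0] := by
    ext1 i j
    fin_cases i <;> fin_cases j <;>
      simp [derivationJacobian, colMinor_eq, singhMatrix, pderiv_X, hdBn]
  have hBQ : -(X 1 * dBn) ∈ Q := Q.neg_mem (Q.mul_mem_right _ hB)
  have hBnQ : X 1 ^ n ∈ Q := Q.pow_mem_of_mem hB n hn
  refine isRegularLocalRing_localization_of_entry_notMem P 0 (k := 2) ![0, 1] (by decide)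
    ![pderiv 1, pderiv 2] hD ?_
  rw [hJ, Matrix.det_fin_two_of, mul_zero, zero_sub, neg_mem_iff]
  refine hprime.mul_notMem ?_ hD
  rwa [Q.add_mem_iff_left hBQ, Q.sub_mem_iff_left hBnQ]

theorem isRegularLocalRing_of_X_zero_notMem (h2 : (2 : K) ≠ 0)
    (hB : X 1 ∈ P.comap (Ideal.Quotient.mk _)) (hA : X 0 ∉ P.comap (Ideal.Quotient.mk _)) :
    IsRegularLocalRing (Localization.AtPrime P) := by
  set Q := P.comap (Ideal.Quotient.mk (minorsIdeal (singhMatrix K m n))) with hQ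
  have hprime : Q.IsPrime := hQ ▸ inferInstance
  have hA2 : X 0 ^ 2 ∉ Q := mt (hprime.mem_of_pow_mem 2) hA
  set U : MvPolynomial (Fin 5) K := X 0 ^ 2 + X 4 ^ m with hUdef
  have hU : U ∈ Q := by
    have hrel : U * X 0 ^ 2 = colMinor (singhMatrix K m n) 0 1 + X 1 * X 2 := by
      rw [colMinor_singhMatrix_zero_one, sub_add_cancel]
    refine (hprime.mem_or_mem ?_).resolve_right hA2
    exact hrel ▸ Q.add_mem (colMinor_mem_comap_mk _ P 0 1) (Q.mul_mem_right _ hB)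
  have h2Q : 2 ∉ Q := fun h ↦ hprime.ne_top <|
    Q.eq_top_of_isUnit_mem h (by simpa only [map_ofNat] using h2.isUnit.map (C (σ := Fin 5)))
  have hJ : derivationJacobian ![pderiv 0, pderiv 3]
      (fun j ↦ colMinor (singhMatrix K m n) 1 (![0, 2] j)) =
        !![-(U * (2 * X 0) + X 0 ^ 2 * (2 * X 0)), -(X 3 * (2 * X 0)); 0, -X 1 - X 0 ^ 2] := by
    ext1 i j
    fin_cases i <;> fin_cases j <;>
      simp [derivationJacobian, colMinor_eq, singhMatrix, pderiv_X, hUdef]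
  refine isRegularLocalRing_localization_of_entry_notMem P 1 (k := 1) ![0, 2] (by decide)
    ![pderiv 0, pderiv 3] hA2 ?_
  rw [hJ, Matrix.det_fin_two_of, mul_zero, sub_zero, ← add_mul]
  refine hprime.mul_notMem (mt neg_mem_iff.1 (hprime.mul_notMem ?_ (hprime.mul_notMem h2Q hA))) ?_
  · rwa [Q.add_mem_iff_right hU]
  · rwa [Q.sub_mem_iff_right (Q.neg_mem hB)]

theorem isRegularLocalRing_of_X_two_mul_notMem (hA : X 0 ∈ P.comap (Ideal.Quotient.mk _))
    (hC : X 2 * (X 2 + X 4 ^ m) ∉ P.comap (Ideal.Quotient.mk _)) :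
    IsRegularLocalRing (Localization.AtPrime P) := by
  set Q := P.comap (Ideal.Quotient.mk (minorsIdeal (singhMatrix K m n)))
  set dBn : MvPolynomial (Fin 5) K := pderiv 1 (X 1 ^ n) with hdBn
  have hJ : derivationJacobian ![pderiv 1, pderiv 3]
      (fun j ↦ colMinor (singhMatrix K m n) 0 (![1, 2] j)) =
        !![-X 2, (X 0 ^ 2 + X 4 ^ m) * dBn; 0, -(X 0 ^ 2 + X 4 ^ m) - X 2] := by
    ext1 i j
    fin_cases i <;> fin_cases j <;>
      simp [derivationJacobian, colMinor_eq, singhMatrix, pderiv_X, hdBn]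
  have hdet : -X 2 * (-(X 0 ^ 2 + X 4 ^ m) - X 2) =
      X 0 * (X 0 * X 2) + X 2 * (X 2 + X 4 ^ m : MvPolynomial (Fin 5) K) := by ring
  refine isRegularLocalRing_localization_of_entry_notMem P 1 (k := 0) ![1, 2] (by decide)
    ![pderiv 1, pderiv 3] (fun h ↦ hC (Q.mul_mem_right _ h)) ?_
  rwa [hJ, Matrix.det_fin_two_of, mul_zero, sub_zero, hdet,
    Q.add_mem_iff_right (Q.mul_mem_right _ hA)]

theorem exists_minorsIdeal_singhMatrix_le_span_sup_sq {Q : Ideal (MvPolynomial (Fin 5) K)}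
    [Q.IsPrime] (hn : 0 < n) (hA : X 0 ∈ Q) (hB : X 1 ∈ Q)
    (hC : X 2 * (X 2 + X 4 ^ m) ∈ Q) (hD : X 3 ∈ Q) :
    ∃ g ∈ Q, minorsIdeal (singhMatrix K m n) ≤ Ideal.span {g} ⊔ Q ^ 2 := by
  have hmul {x y : MvPolynomial (Fin 5) K} (hx : x ∈ Q) (hy : y ∈ Q) : x * y ∈ Q ^ 2 :=
    pow_two Q ▸ Ideal.mul_mem_mul hx hy
  have hE : X 1 ^ n - X 3 ∈ Q := Q.sub_mem (Q.pow_mem_of_mem hB n hn) hD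
  have hA2 : X 0 ^ 2 ∈ Q ^ 2 := Ideal.pow_mem_pow hA 2
  have h12 : colMinor (singhMatrix K m n) 1 2 ∈ Q ^ 2 := by
    rw [colMinor_singhMatrix_one_two]
    exact (Q ^ 2).sub_mem (hmul hB hE) (Ideal.mul_mem_left _ _ hA2)
  simp only [minorsIdeal_fin_three, Ideal.span_le, Set.insert_subset_iff,
    Set.singleton_subset_iff, SetLike.mem_coe]
  obtain hC | hC := Ideal.IsPrime.mem_or_mem ‹_› hC
  · refine ⟨colMinor (singhMatrix K m n) 0 2, ?_, Ideal.mem_sup_right ?_,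
      Ideal.mem_sup_left (Ideal.mem_span_singleton_self _), Ideal.mem_sup_right h12⟩
    · rw [colMinor_singhMatrix_zero_two]
      exact Q.sub_mem (Q.mul_mem_left _ hE) (Q.mul_mem_right _ hD)
    · rw [colMinor_singhMatrix_zero_one]
      exact (Q ^ 2).sub_mem (Ideal.mul_mem_left _ _ hA2) (hmul hB hC)
  · set J := Ideal.span {X 1} ⊔ Q ^ 2
    have hBJ : X 1 ∈ J := Ideal.mem_sup_left (Ideal.mem_span_singleton_self _)
    have hA2J : X 0 ^ 2 ∈ J := Ideal.mem_sup_right hA2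
    refine ⟨X 1, hB, ?_, ?_, Ideal.mem_sup_right h12⟩
    · rw [colMinor_singhMatrix_zero_one]
      exact J.sub_mem (J.mul_mem_left _ hA2J) (J.mul_mem_right _ hBJ)
    · have h02 : colMinor (singhMatrix K m n) 0 2 =
          (X 1 ^ n - X 3) * X 0 ^ 2 + X 4 ^ m * X 1 ^ n - X 3 * (X 2 + X 4 ^ m) := by
        rw [colMinor_singhMatrix_zero_two]
        ring
      exact h02 ▸ J.sub_mem (J.add_mem (J.mul_mem_left _ hA2J)
        (J.mul_mem_left _ (J.pow_mem_of_mem hBJ n hn))) (Ideal.mem_sup_right (hmul hD hC))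

theorem not_isRegularLocalRing_of_X_mem (hn : 0 < n) (hA : X 0 ∈ P.comap (Ideal.Quotient.mk _))
    (hB : X 1 ∈ P.comap (Ideal.Quotient.mk _))
    (hC : X 2 * (X 2 + X 4 ^ m) ∈ P.comap (Ideal.Quotient.mk _))
    (hD : X 3 ∈ P.comap (Ideal.Quotient.mk _)) :
    ¬ IsRegularLocalRing (Localization.AtPrime P) := by
  obtain ⟨g, hg, hle⟩ := exists_minorsIdeal_singhMatrix_le_span_sup_sq hn hA hB hC hD
  refine not_isRegularLocalRing_localization_of_card_lt_height P (g := fun _ : Unit ↦ g)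
    (fun _ ↦ hg) (by rwa [Set.range_const]) ?_
  exact lt_of_lt_of_le (by norm_num) (two_le_height_minorsIdeal_singhMatrix K m n)

end SinghMatrix

theorem stmt12_general {K : Type*} [Field K] (h2 : (2 : K) ≠ 0) (m : ℕ) {n : ℕ} (hn : 0 < n)
    (P : Ideal (MvPolynomial (Fin 5) K ⧸ minorsIdeal (singhMatrix K m n))) [P.IsPrime] :
    let x (i : Fin 5) := Ideal.Quotient.mk (minorsIdeal (singhMatrix K m n)) (X i)
    ¬ IsRegularLocalRing (Localization.AtPrime P) ↔
      Ideal.span {x 0, x 1, x 2 * (x 2 + x 4 ^ m), x 3} ≤ P := by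
  simp only [Ideal.span_le, Set.insert_subset_iff, Set.singleton_subset_iff, SetLike.mem_coe,
    ← map_pow, ← map_add, ← map_mul, ← Ideal.mem_comap]
  refine ⟨fun h ↦ ?_, fun ⟨hA, hB, hC, hD⟩ ↦ not_isRegularLocalRing_of_X_mem P hn hA hB hC hD⟩
  have hB := by_contra fun hB ↦ h (isRegularLocalRing_of_X_one_notMem P hB)
  have hA := by_contra fun hA ↦ h (isRegularLocalRing_of_X_zero_notMem P h2 hB hA)
  have hC := by_contra fun hC ↦ h (isRegularLocalRing_of_X_two_mul_notMem P hA hC)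
  have hD := by_contra fun hD ↦ h (isRegularLocalRing_of_X_three_notMem P hn hB hD)
  exact ⟨hA, hB, hC, hD⟩

/-- the singular locus of Spec R, R = K[A,B,C,D,T]/I
(variables 0=A, 1=B, 2=C, 3=D, 4=T, char K = p > 2), is V(a, b, c(c+tᵐ), d):
a prime P fails to give a regular local ring R_P exactly when P ⊇ (a, b, c(c+tᵐ), d). -/
theorem stmt12 (K : Type) [Field K] (p : ℕ) [Fact p.Prime] [CharP K p] (hp : 2 < p)
    (m n : ℕ) (hm : 0 < m) (hn : 0 < n)
    (I : Ideal (MvPolynomial (Fin 5) K))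
    (hI : I = Ideal.span
      { (X 0 ^ 2) * (X 0 ^ 2 + X 4 ^ m) - X 1 * X 2,
        (X 0 ^ 2 + X 4 ^ m) * (X 1 ^ n - X 3) - X 2 * X 3,
        X 1 * (X 1 ^ n - X 3) - (X 0 ^ 2) * X 3 })
    (a b c d t : MvPolynomial (Fin 5) K ⧸ I)
    (ha : a = Ideal.Quotient.mk I (X 0)) (hb : b = Ideal.Quotient.mk I (X 1))
    (hc : c = Ideal.Quotient.mk I (X 2)) (hd : d = Ideal.Quotient.mk I (X 3))
    (ht : t = Ideal.Quotient.mk I (X 4)) :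
    ∀ (P : Ideal (MvPolynomial (Fin 5) K ⧸ I)) [P.IsPrime],
      (¬ IsRegularLocal (Localization.AtPrime P) ↔
        Ideal.span {a, b, c * (c + t ^ m), d} ≤ P) := by
  have h2 : (2 : K) ≠ 0 := mt (CharP.cast_eq_zero_iff K p 2).1 (Nat.not_dvd_of_pos_of_lt two_pos hp)
  rw [← minorsIdeal_singhMatrix] at hI
  subst ha hb hc hd ht hI
  exact fun P _ ↦ (isRegularLocal_iff_isRegularLocalRing _).not.trans (stmt12_general h2 m hn P)
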